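/- arXiv:2404.03813 — 2 statements merged into one kernel-verified Lean document; each statement's English description precedes it below -/
import Mathlib

section
/- Let n ≥ 1, let ρ be a 2^n × 2^n positive semidefinite Hermitian complex matrix with trace 1 (a density matrix), and let x ∈ 𝔽₂^{2n}. Then q_ρ(x) ≤ tr(ρ²)/2^n ≤ 1/2^n. -/
/-!
Since every sign `(-1)^[x,a]` is at most `1`, `q_ρ(x) ≤ ∑ₐ p_ρ(a)² ≤ (maxₐ p_ρ(a)) · ∑ₐ p_ρ(a)`.

* The trace `tr(W_{(a,b)} ρ)` is, up to a phase, `∑ₖ (-1)^{b·k} ρ_{k,k+a}`. Together with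
  `|ρ_{jk}|² ≤ ρ_{jj} ρ_{kk}` (Cauchy–Schwarz for a factorization `ρ = Bᴴ B`) and AM–GM this gives
  `|tr(W_a ρ)| ≤ tr ρ = 1`, hence `p_ρ(a) ≤ 2⁻ⁿ`.
* For fixed `a`, Parseval for the characters `b ↦ (-1)^{b·k}` of `𝔽₂ⁿ` computes the sum over `b` of
  `|tr(W_{(a,b)} ρ)|²`; summing over `a` gives `∑ₐ p_ρ(a) ≤ ∑_{jk} |ρ_{jk}|² = tr(ρ²)`.

The bound `tr(ρ²) = ∑_{jk} |ρ_{jk}|² ≤ ∑_{jk} ρ_{jj} ρ_{kk} = 1` is the same Cauchy–Schwarz inequality.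
-/

open scoped Classical ComplexOrder

noncomputable section

/-- `𝔽₂ⁿ`, indexing the computational basis of `ℂ^(2^n)`. -/
abbrev QIdx (n : ℕ) := Fin n → ZMod 2

/-- The phase space `𝔽₂^{2n} = 𝔽₂ⁿ × 𝔽₂ⁿ`. -/
abbrev PhSp (n : ℕ) := QIdx n × QIdx n

/-- The Weyl operator `W_{(a,b)} = i^{a'·b'} (X^{a₁}Z^{b₁}) ⊗ ⋯ ⊗ (X^{aₙ}Z^{bₙ})`,
written entrywise in the computational basis:
`(W_{(a,b)})_{j,k} = i^{a·b} · (-1)^{b·k} · [j = k + a]`. -/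
def Weyl {n : ℕ} (x : PhSp n) : Matrix (QIdx n) (QIdx n) ℂ :=
  fun j k =>
    Complex.I ^ (∑ i, (x.1 i).val * (x.2 i).val) *
      (-1 : ℂ) ^ (∑ i, (x.2 i).val * (k i).val) *
      (if j = k + x.1 then 1 else 0)

/-- The symplectic product `[x, y] = a·d + b·c` of `x = (a,b)`, `y = (c,d) ∈ 𝔽₂^{2n}`. -/
def symp {n : ℕ} (x y : PhSp n) : ZMod 2 :=
  ∑ i, (x.1 i * y.2 i + x.2 i * y.1 i)

/-- `p_ρ(x) = tr(W_x ρ)² / 2ⁿ` for a density matrix `ρ`. -/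
def pMixed {n : ℕ} (ρ : Matrix (QIdx n) (QIdx n) ℂ) (x : PhSp n) : ℝ :=
  ((Weyl x * ρ).trace).re ^ 2 / 2 ^ n

/-- `q_ρ(x) = Σ_a (−1)^{[x,a]} p_ρ(a)²` for a density matrix `ρ`. -/
def qMixed {n : ℕ} (ρ : Matrix (QIdx n) (QIdx n) ℂ) (x : PhSp n) : ℝ :=
  ∑ a : PhSp n, (-1 : ℝ) ^ (symp x a).val * pMixed ρ a ^ 2

/-- Orthogonality of the characters `b ↦ (-1)^{b·k}` of `𝔽₂ⁿ`. -/
theorem sum_sign_mul_sign {n : ℕ} (k l : QIdx n) :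
    ∑ b : QIdx n, (-1 : ℂ) ^ (∑ i, (b i).val * (k i).val) * (-1 : ℂ) ^ (∑ i, (b i).val * (l i).val)
      = if k = l then 2 ^ n else 0 := by
  have h1 : ∀ s t : ZMod 2, ∑ u : ZMod 2, (-1 : ℂ) ^ (u.val * s.val) * (-1 : ℂ) ^ (u.val * t.val)
      = if s = t then 2 else 0 := by
    intro s t
    have hu : (Finset.univ : Finset (ZMod 2)) = {0, 1} := by decide
    have hv : ∀ w : ZMod 2, w = 0 ∨ w = 1 := by decide
    rw [hu, Finset.sum_pair (by decide)]
    rcases hv s with rfl | rfl <;> rcases hv t with rfl | rfl <;> simp [ZMod.val_one] <;> norm_num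
  have h2 : ∀ b : QIdx n,
      (-1 : ℂ) ^ (∑ i, (b i).val * (k i).val) * (-1 : ℂ) ^ (∑ i, (b i).val * (l i).val)
      = ∏ i, ((-1 : ℂ) ^ ((b i).val * (k i).val) * (-1 : ℂ) ^ ((b i).val * (l i).val)) := by
    intro b
    rw [Finset.prod_mul_distrib, Finset.prod_pow_eq_pow_sum, Finset.prod_pow_eq_pow_sum]
  simp_rw [h2]
  rw [← Fintype.prod_sum
    (fun i (u : ZMod 2) => (-1 : ℂ) ^ (u.val * (k i).val) * (-1 : ℂ) ^ (u.val * (l i).val))]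
  simp_rw [h1]
  split_ifs with h
  · subst h; simp
  · obtain ⟨i, hi⟩ := Function.ne_iff.mp h
    exact Finset.prod_eq_zero (Finset.mem_univ i) (by simp [hi])

/-- Parseval's identity for the characters `k ↦ (-1)^{b·k}` of `𝔽₂ⁿ`. -/
theorem parseval_sign {n : ℕ} (f : QIdx n → ℂ) :
    ∑ b : QIdx n, ‖∑ k : QIdx n, (-1 : ℂ) ^ (∑ i, (b i).val * (k i).val) * f k‖ ^ 2
      = 2 ^ n * ∑ k, ‖f k‖ ^ 2 := by
  have key : ∑ b : QIdx n, (∑ k : QIdx n, (-1 : ℂ) ^ (∑ i, (b i).val * (k i).val) * f k) *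
      (starRingEnd ℂ) (∑ k : QIdx n, (-1 : ℂ) ^ (∑ i, (b i).val * (k i).val) * f k)
      = 2 ^ n * ∑ k, f k * (starRingEnd ℂ) (f k) := by
    simp only [map_sum, map_mul, map_pow, map_neg, map_one, Finset.sum_mul_sum]
    rw [Finset.sum_comm, Finset.mul_sum]
    refine Finset.sum_congr rfl fun k _ => ?_
    rw [Finset.sum_comm]
    calc _ = ∑ l, (f k * (starRingEnd ℂ) (f l)) * ∑ b : QIdx n,
            (-1 : ℂ) ^ (∑ i, (b i).val * (k i).val) * (-1 : ℂ) ^ (∑ i, (b i).val * (l i).val) := by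
          refine Finset.sum_congr rfl fun l _ => ?_
          rw [Finset.mul_sum]
          exact Finset.sum_congr rfl fun b _ => by ring
      _ = _ := by
          simp_rw [sum_sign_mul_sign]
          simp [mul_comm]
  simp only [Complex.mul_conj, Complex.normSq_eq_norm_sq] at key
  exact_mod_cast key

/-- `tr(W_{(a,b)} ρ)` is, up to a phase, the Fourier coefficient at `b` of the shifted diagonal
`k ↦ ρ_{k,k+a}`. -/
theorem norm_trace_Weyl_mul {n : ℕ} (ρ : Matrix (QIdx n) (QIdx n) ℂ) (a b : QIdx n) :
    ‖(Weyl (a, b) * ρ).trace‖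
      = ‖∑ k : QIdx n, (-1 : ℂ) ^ (∑ i, (b i).val * (k i).val) * ρ k (k + a)‖ := by
  have : (Weyl (a, b) * ρ).trace = Complex.I ^ (∑ i, (a i).val * (b i).val) *
      ∑ k : QIdx n, (-1 : ℂ) ^ (∑ i, (b i).val * (k i).val) * ρ k (k + a) := by
    simp only [Matrix.trace, Matrix.diag, Matrix.mul_apply, Weyl]
    rw [Finset.sum_comm, Finset.mul_sum]
    refine Finset.sum_congr rfl fun k _ => ?_
    rw [Finset.sum_eq_single (k + a)]
    · simp [mul_assoc]
    · intro j _ hj; simp [hj]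
    · simp
  rw [this, norm_mul]
  simp

open scoped MatrixOrder in
/-- The `2 × 2` principal minors of a positive semidefinite matrix are nonnegative; for `ρ = Bᴴ B`
this is Cauchy–Schwarz for the columns of `B`. -/
theorem posSemidef_norm_sq_le {ι : Type*} [Fintype ι] {ρ : Matrix ι ι ℂ}
    (hρ : ρ.PosSemidef) (j k : ι) : ‖ρ j k‖ ^ 2 ≤ (ρ j j).re * (ρ k k).re := by
  obtain ⟨B, hB⟩ := CStarAlgebra.nonneg_iff_eq_star_mul_self.mp hρ.nonneg
  rw [Matrix.star_eq_conjTranspose] at hB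
  subst hB
  have hd : ∀ j, ((B.conjTranspose * B) j j).re = ∑ i, ‖B i j‖ ^ 2 := by
    intro j
    simp only [Matrix.mul_apply, Matrix.conjTranspose_apply, Complex.re_sum]
    refine Finset.sum_congr rfl fun i _ => ?_
    rw [← Complex.normSq_eq_norm_sq, Complex.star_def, mul_comm, Complex.mul_conj,
      Complex.ofReal_re]
  rw [hd, hd]
  calc _ ≤ (∑ i, ‖B i j‖ * ‖B i k‖) ^ 2 := by
        gcongr
        rw [Matrix.mul_apply]
        refine (norm_sum_le _ _).trans_eq ?_
        simp
    _ ≤ _ := Finset.sum_mul_sq_le_sq_mul_sq _ _ _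

theorem trace_mul_self_re {ι : Type*} [Fintype ι] {ρ : Matrix ι ι ℂ}
    (hρ : ρ.IsHermitian) : ((ρ * ρ).trace).re = ∑ j, ∑ k, ‖ρ j k‖ ^ 2 := by
  simp only [Matrix.trace, Matrix.diag, Matrix.mul_apply, Complex.re_sum]
  refine Finset.sum_congr rfl fun j _ => Finset.sum_congr rfl fun k _ => ?_
  rw [← hρ.apply k j, Complex.star_def, Complex.mul_conj, Complex.normSq_eq_norm_sq,
    Complex.ofReal_re]

theorem sum_diag_re {ι : Type*} [Fintype ι] {ρ : Matrix ι ι ℂ} (htr : ρ.trace = 1) :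
    ∑ k, (ρ k k).re = 1 := by
  simpa [Matrix.trace] using congrArg Complex.re htr

theorem trace_mul_self_re_le_one {ι : Type*} [Fintype ι] {ρ : Matrix ι ι ℂ}
    (hρ : ρ.PosSemidef) (htr : ρ.trace = 1) : ((ρ * ρ).trace).re ≤ 1 := by
  rw [trace_mul_self_re hρ.1]
  calc _ ≤ ∑ j, ∑ k, (ρ j j).re * (ρ k k).re := by
        gcongr with j _ k _
        exact posSemidef_norm_sq_le hρ j k
    _ = 1 := by rw [← Finset.sum_mul_sum, sum_diag_re htr, one_mul]

theorem norm_trace_Weyl_mul_le_one {n : ℕ} {ρ : Matrix (QIdx n) (QIdx n) ℂ}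
    (hρ : ρ.PosSemidef) (htr : ρ.trace = 1) (a b : QIdx n) :
    ‖(Weyl (a, b) * ρ).trace‖ ≤ 1 := by
  rw [norm_trace_Weyl_mul]
  have hdiag : ∀ k, 0 ≤ (ρ k k).re := fun k => (Complex.le_def.mp hρ.diag_nonneg).1
  calc _ ≤ ∑ k, ((ρ k k).re + (ρ (k + a) (k + a)).re) / 2 := by
        refine (norm_sum_le _ _).trans (Finset.sum_le_sum fun k _ => ?_)
        have h := posSemidef_norm_sq_le hρ k (k + a)
        have h1 := hdiag k
        have h2 := hdiag (k + a)
        simp only [norm_mul, norm_pow, norm_neg, norm_one, one_pow, one_mul]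
        refine abs_le_of_sq_le_sq' ?_ (by linarith) |>.2
        nlinarith [sq_nonneg ((ρ k k).re - (ρ (k + a) (k + a)).re)]
    _ = 1 := by
        have hshift : ∑ k, (ρ (k + a) (k + a)).re = ∑ k, (ρ k k).re :=
          Equiv.sum_comp (Equiv.addRight a) (fun k => (ρ k k).re)
        rw [← Finset.sum_div, Finset.sum_add_distrib, hshift, sum_diag_re htr]
        norm_num

theorem pMixed_le_norm {n : ℕ} (ρ : Matrix (QIdx n) (QIdx n) ℂ) (x : PhSp n) :
    pMixed ρ x ≤ ‖(Weyl x * ρ).trace‖ ^ 2 / 2 ^ n := by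
  unfold pMixed
  gcongr ?_ / _
  rw [← sq_abs]
  gcongr
  exact Complex.abs_re_le_norm _

/-- Equality holds, because `tr(W_x ρ)` is real; the inequality `re² ≤ |·|²` suffices and
avoids proving this. -/
theorem sum_pMixed_le {n : ℕ} {ρ : Matrix (QIdx n) (QIdx n) ℂ} (hρ : ρ.IsHermitian) :
    ∑ x, pMixed ρ x ≤ ((ρ * ρ).trace).re := by
  refine (Finset.sum_le_sum fun x _ => pMixed_le_norm ρ x).trans_eq ?_
  rw [← Finset.sum_div, Fintype.sum_prod_type]
  simp_rw [norm_trace_Weyl_mul, parseval_sign]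
  rw [← Finset.mul_sum, mul_div_cancel_left₀ _ (by positivity), trace_mul_self_re hρ,
    Finset.sum_comm]
  exact Finset.sum_congr rfl fun k _ =>
    Equiv.sum_comp (Equiv.addLeft k) (fun l => ‖ρ k l‖ ^ 2)

/-- For a density matrix `ρ` on `n ≥ 1` qubits and any `x ∈ 𝔽₂^{2n}`,
`q_ρ(x) ≤ tr(ρ²)/2ⁿ ≤ 1/2ⁿ`. -/
theorem q_rho_trivial_upper_mixed (n : ℕ) (hn : 1 ≤ n)
    (ρ : Matrix (QIdx n) (QIdx n) ℂ) (hρ : ρ.PosSemidef) (htr : ρ.trace = 1)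
    (x : PhSp n) :
    qMixed ρ x ≤ ((ρ * ρ).trace).re / 2 ^ n ∧ ((ρ * ρ).trace).re / 2 ^ n ≤ 1 / 2 ^ n := by
  have hpow : (0 : ℝ) < 2 ^ n := by positivity
  refine ⟨?_, by gcongr; exact trace_mul_self_re_le_one hρ htr⟩
  calc qMixed ρ x ≤ ∑ a : PhSp n, pMixed ρ a / 2 ^ n := by
        refine Finset.sum_le_sum fun a _ => ?_
        have h0 : 0 ≤ pMixed ρ a := by unfold pMixed; positivity
        have h1 : pMixed ρ a ≤ 1 / 2 ^ n := by
          refine (pMixed_le_norm ρ a).trans ?_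
          gcongr
          exact pow_le_one₀ (norm_nonneg _) (norm_trace_Weyl_mul_le_one hρ htr a.1 a.2)
        have hs : (-1 : ℝ) ^ (symp x a).val ≤ 1 := by
          rcases neg_one_pow_eq_or ℝ (symp x a).val with h | h <;> rw [h]; norm_num
        calc _ ≤ 1 * pMixed ρ a ^ 2 := by gcongr
          _ = pMixed ρ a * pMixed ρ a := by ring
          _ ≤ pMixed ρ a * (1 / 2 ^ n) := by gcongr
          _ = _ := by ring
    _ ≤ _ := by
        rw [← Finset.sum_div]
        gcongr
        exact sum_pMixed_le hρ.1
end
end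

section
/- Let n ≥ 1, let ρ be a 2^n × 2^n positive semidefinite Hermitian complex matrix with trace 1 (a density matrix), and let S ⊆ 𝔽₂^{2n} be an 𝔽₂-linear subspace of dimension n with [x,y] = 0 for all x, y ∈ S. Then Σ_{x ∈ S} q_ρ(x) = 2^n · Σ_{x ∈ S} p_ρ(x)². -/
/-!
Exchanging the two sums, the left side becomes `Σ_a (Σ_{x ∈ S} (-1)^{[x,a]}) p_ρ(a)²`. For a subspace
`S` the inner character sum is `|S|` when `a` lies in the symplectic complement of `S` and vanishes
otherwise (`sum_sign_symp`). The symplectic form is nondegenerate, so an isotropic subspace of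
dimension `n` has a complement of dimension `2n - n = n` containing it, and therefore equals its own
complement (`mem_of_symp_eq_zero`); moreover `|S| = 2ⁿ`. The
identity is thus an instance of Poisson summation, valid for any real function in place of `p_ρ²`.
-/

open scoped Classical ComplexOrder

noncomputable section

/-- The symplectic product as a bilinear form over `𝔽₂`. -/
def sympForm (n : ℕ) : LinearMap.BilinForm (ZMod 2) (PhSp n) :=
  LinearMap.mk₂ (ZMod 2) symp
    (fun x x' y => by
      simp only [symp, ← Finset.sum_add_distrib]
      exact Finset.sum_congr rfl fun i _ => by
        simp only [Prod.fst_add, Prod.snd_add, Pi.add_apply]; ring)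
    (fun c x y => by
      simp only [symp, smul_eq_mul, Finset.mul_sum]
      exact Finset.sum_congr rfl fun i _ => by
        simp only [Prod.smul_fst, Prod.smul_snd, Pi.smul_apply, smul_eq_mul]; ring)
    (fun x y y' => by
      simp only [symp, ← Finset.sum_add_distrib]
      exact Finset.sum_congr rfl fun i _ => by
        simp only [Prod.fst_add, Prod.snd_add, Pi.add_apply]; ring)
    (fun c x y => by
      simp only [symp, smul_eq_mul, Finset.mul_sum]
      exact Finset.sum_congr rfl fun i _ => by
        simp only [Prod.smul_fst, Prod.smul_snd, Pi.smul_apply, smul_eq_mul]; ring)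

lemma sympForm_apply {n : ℕ} (x y : PhSp n) : sympForm n x y = symp x y := rfl

lemma symp_add_left {n : ℕ} (x x' y : PhSp n) : symp (x + x') y = symp x y + symp x' y := by
  simp only [← sympForm_apply, map_add, LinearMap.add_apply]

lemma symp_comm {n : ℕ} (x y : PhSp n) : symp x y = symp y x :=
  Finset.sum_congr rfl fun i _ => by ring

lemma sympForm_isRefl (n : ℕ) : (sympForm n).IsRefl := fun x y h => by
  rw [sympForm_apply] at *
  rw [symp_comm, h]

lemma sympForm_nondegenerate (n : ℕ) : (sympForm n).Nondegenerate := by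
  refine (LinearMap.IsRefl.nondegenerate_iff_separatingLeft (sympForm_isRefl n)).2 ?_
  intro x hx
  ext i
  · have h := hx (0, Pi.single i 1)
    simpa [sympForm_apply, symp, Pi.single_apply] using h
  · have h := hx (Pi.single i 1, 0)
    simpa [sympForm_apply, symp, Pi.single_apply] using h

/-- An `n`-dimensional isotropic subspace contains its symplectic complement. -/
lemma mem_of_symp_eq_zero {n : ℕ} (S : Submodule (ZMod 2) (PhSp n))
    (hdim : Module.finrank (ZMod 2) S = n) (hiso : ∀ x ∈ S, ∀ y ∈ S, symp x y = 0)
    {a : PhSp n} (ha : ∀ x ∈ S, symp x a = 0) : a ∈ S := by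
  have hle : S ≤ (sympForm n).orthogonal S := fun y hy x hx => hiso x hx y hy
  have hfin : Module.finrank (ZMod 2) ((sympForm n).orthogonal S) = n := by
    rw [LinearMap.BilinForm.finrank_orthogonal (sympForm_nondegenerate n), hdim,
      Module.finrank_prod, Module.finrank_fin_fun]
    omega
  rw [Submodule.eq_of_le_of_finrank_eq hle (hdim.trans hfin.symm)]
  exact ha

lemma sign_add (s t : ZMod 2) :
    (-1 : ℝ) ^ (s + t).val = (-1 : ℝ) ^ s.val * (-1 : ℝ) ^ t.val := by
  rw [ZMod.val_add, ← pow_add, neg_one_pow_eq_pow_mod_two (n := s.val + t.val)]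

/-- Character orthogonality on a Lagrangian subspace. -/
lemma sum_sign_symp {n : ℕ} (S : Submodule (ZMod 2) (PhSp n))
    (hdim : Module.finrank (ZMod 2) S = n) (hiso : ∀ x ∈ S, ∀ y ∈ S, symp x y = 0)
    (a : PhSp n) :
    ∑ x ∈ Finset.univ.filter (· ∈ S), (-1 : ℝ) ^ (symp x a).val = if a ∈ S then 2 ^ n else 0 := by
  split_ifs with ha
  · have hcard : (Finset.univ.filter (· ∈ S)).card = 2 ^ n := by
      have h := Module.card_eq_pow_finrank (K := ZMod 2) (V := S)
      rw [hdim, ZMod.card, Fintype.card_subtype] at h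
      exact h
    rw [Finset.sum_congr rfl (g := fun _ => (1 : ℝ)), Finset.sum_const, hcard]
    · simp
    · intro x hx
      rw [hiso x (Finset.mem_filter.1 hx).2 a ha]
      simp
  · obtain ⟨y, hy, hya⟩ : ∃ y ∈ S, symp y a ≠ 0 := by
      by_contra! h
      exact ha (mem_of_symp_eq_zero S hdim hiso h)
    have hone : symp y a = 1 := Fin.eq_one_of_ne_zero _ hya
    -- Translation by `y` permutes `S` and flips every sign, so the sum equals its own negative.
    have hneg : ∑ x ∈ Finset.univ.filter (· ∈ S), (-1 : ℝ) ^ (symp x a).val =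
        ∑ x ∈ Finset.univ.filter (· ∈ S), -(-1 : ℝ) ^ (symp x a).val := by
      refine Finset.sum_equiv (Equiv.addRight y) (fun x => ?_) (fun x _ => ?_)
      · simp [S.add_mem_iff_left hy]
      · rw [Equiv.coe_addRight, symp_add_left, sign_add, hone]
        simp [ZMod.val_one]
    rw [Finset.sum_neg_distrib] at hneg
    linarith

/-- For a density matrix `ρ` and an `n`-dimensional isotropic subspace `S` of `𝔽₂^{2n}`,
`Σ_{x ∈ S} q_ρ(x) = 2ⁿ · Σ_{x ∈ S} p_ρ(x)²`. -/
theorem q_mass_on_lagrangian (n : ℕ) (hn : 1 ≤ n)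
    (ρ : Matrix (QIdx n) (QIdx n) ℂ) (hρ : ρ.PosSemidef) (htr : ρ.trace = 1)
    (S : Submodule (ZMod 2) (PhSp n))
    (hdim : Module.finrank (ZMod 2) S = n)
    (hiso : ∀ x ∈ S, ∀ y ∈ S, symp x y = 0) :
    (∑ x ∈ Finset.univ.filter (· ∈ S), qMixed ρ x) =
      2 ^ n * ∑ x ∈ Finset.univ.filter (· ∈ S), pMixed ρ x ^ 2 := by
  simp only [qMixed]
  rw [Finset.sum_comm, Finset.mul_sum, Finset.sum_filter]
  refine Finset.sum_congr rfl fun a _ => ?_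
  rw [← Finset.sum_mul, sum_sign_symp S hdim hiso, ite_mul, zero_mul]
end
end
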